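/- Let D be an integral domain and ⋆ a (semi)star operation on D (i.e., a semistar operation with D^⋆ = D). Then D is a ⋆-Dedekind domain if and only if D is a Krull domain and ⋆_f = t (i.e., E^{⋆_f} = E^t for every nonzero D-submodule E of K). -/

import Mathlib

open scoped Pointwise

section SemistarDefs

variable {D : Type*} [CommRing D] [IsDomain D]
variable {K : Type*} [Field K] [Algebra D K] [IsFractionRing D K]

/-- `star` is a semistar operation on the integral domain `D` with quotient field `K`:
a map on (nonzero) `D`-submodules of `K` satisfying `(xE)^⋆ = x·E^⋆`, monotonicity,
extensivity and idempotence. -/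
structure IsSemistarOperation (star : Submodule D K → Submodule D K) : Prop where
  ne_bot : ∀ {E : Submodule D K}, E ≠ ⊥ → star E ≠ ⊥
  map_smul : ∀ (x : K), x ≠ 0 → ∀ {E : Submodule D K}, E ≠ ⊥ →
    star (Submodule.map (LinearMap.mulLeft D x) E) = Submodule.map (LinearMap.mulLeft D x) (star E)
  mono : ∀ {E F : Submodule D K}, E ≠ ⊥ → F ≠ ⊥ → E ≤ F → star E ≤ star F
  le_star : ∀ {E : Submodule D K}, E ≠ ⊥ → E ≤ star E
  star_star : ∀ {E : Submodule D K}, E ≠ ⊥ → star (star E) = star E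

/-- The image in `K` of an ideal `I` of `D`, as a `D`-submodule of `K`. -/
def idealExt (K : Type*) [Field K] [Algebra D K] (I : Ideal D) : Submodule D K :=
  Submodule.map (Algebra.linearMap D K) I

/-- `I` is a quasi-⋆-ideal: a nonzero ideal of `D` with `I = I^⋆ ∩ D`. -/
def QuasiStarIdeal (star : Submodule D K → Submodule D K) (I : Ideal D) : Prop :=
  I ≠ ⊥ ∧ Submodule.comap (Algebra.linearMap D K) (star (idealExt K I)) = I

/-- `P` is a quasi-⋆-prime: a prime ideal which is a quasi-⋆-ideal. -/
def QuasiStarPrime (star : Submodule D K → Submodule D K) (P : Ideal D) : Prop :=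
  P.IsPrime ∧ QuasiStarIdeal star P

/-- `M` is a quasi-⋆-maximal ideal: maximal in the set of proper quasi-⋆-ideals of `D`. -/
def QuasiStarMaximal (star : Submodule D K → Submodule D K) (M : Ideal D) : Prop :=
  QuasiStarIdeal star M ∧ M ≠ ⊤ ∧
    ∀ J : Ideal D, QuasiStarIdeal star J → J ≠ ⊤ → M ≤ J → J = M

/-- The finite-type semistar operation `⋆_f` associated to `⋆`:
`E^{⋆_f} = ⋃ { F^⋆ : F nonzero finitely generated, F ⊆ E }`. -/
def finTypeOp (star : Submodule D K → Submodule D K) : Submodule D K → Submodule D K :=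
  fun E => ⨆ (F : Submodule D K) (_ : F ≠ ⊥) (_ : F.FG) (_ : F ≤ E), star F

/-- The extension `E·D_Q` of a `D`-submodule `E` of `K` to the localization of `D` at
(the complement of) `Q`, described as `{ x ∈ K : s·x ∈ E for some s ∉ Q }`. -/
def extendToPrime (Q : Ideal D) (E : Submodule D K) : Submodule D K :=
  Submodule.span D {x : K | ∃ s : D, s ∉ Q ∧ algebraMap D K s * x ∈ E}

/-- The stable semistar operation of finite type `⋆̃` associated to `⋆`:
`E^⋆̃ = ⋂ { E·D_Q : Q a quasi-⋆_f-maximal ideal of D }`. -/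
def stableOp (star : Submodule D K → Submodule D K) : Submodule D K → Submodule D K :=
  fun E => ⨅ (Q : Ideal D) (_ : QuasiStarMaximal (finTypeOp star) Q), extendToPrime Q E

/-- A rank-one discrete valuation ring: a (domain which is a) local PID which is not a field. -/
def IsDVR (R : Type*) [CommRing R] : Prop :=
  ∃ h : IsDomain R, @IsDiscreteValuationRing R _ h

/-- A valuation domain. -/
def IsValuationDomain (R : Type*) [CommRing R] : Prop :=
  ∃ h : IsDomain R, @ValuationRing R _ h

/-- `D` is a ⋆-almost Dedekind domain: `D_M` is a rank-one discrete valuation ring for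
every quasi-⋆_f-maximal ideal `M` of `D`. -/
def StarADD (star : Submodule D K → Submodule D K) : Prop :=
  ∀ (M : Ideal D) [M.IsPrime], QuasiStarMaximal (finTypeOp star) M →
    IsDVR (Localization.AtPrime M)

/-- `D` is a Prüfer ⋆-multiplication domain: `D_M` is a valuation domain for every
quasi-⋆_f-maximal ideal `M` of `D`. -/
def StarPMD (star : Submodule D K → Submodule D K) : Prop :=
  ∀ (M : Ideal D) [M.IsPrime], QuasiStarMaximal (finTypeOp star) M →
    IsValuationDomain (Localization.AtPrime M)

/-- `D` is ⋆-Noetherian: ascending chain condition on quasi-⋆-ideals. -/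
def StarNoetherian (star : Submodule D K → Submodule D K) : Prop :=
  ∀ c : ℕ →o Ideal D, (∀ n, QuasiStarIdeal star (c n)) → ∃ n, ∀ m, n ≤ m → c m = c n

/-- `D` is a ⋆-Dedekind domain: ⋆-Noetherian and a P⋆MD. -/
def StarDedekind (star : Submodule D K → Submodule D K) : Prop :=
  StarNoetherian star ∧ StarPMD star

/-- `D` has the ⋆_f-finite character property: every nonzero element of `D` lies in only
finitely many quasi-⋆_f-maximal ideals. -/
def StarFiniteCharacter (star : Submodule D K → Submodule D K) : Prop :=
  ∀ d : D, d ≠ 0 → {M : Ideal D | QuasiStarMaximal (finTypeOp star) M ∧ d ∈ M}.Finite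

/-- The `v`-operation `E ↦ (D : (D : E))`. -/
def vOp : Submodule D K → Submodule D K := fun E => 1 / (1 / E)

/-- A nonzero `D`-submodule `E` of `K` is quasi-∗-invertible if `(E·(D^∗ : E))^∗ = D^∗`. -/
def QuasiStarInvertible (star : Submodule D K → Submodule D K) (E : Submodule D K) : Prop :=
  star (E * (star 1 / E)) = star (1 : Submodule D K)

/-- `D` has the ∗-cancellation law: for nonzero fractional ideals `A`, `B`, `C`,
`(AB)^∗ = (AC)^∗` implies `B^∗ = C^∗`. -/
def StarCancellation (star : Submodule D K → Submodule D K) : Prop :=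
  ∀ A B C : Submodule D K, A ≠ ⊥ → B ≠ ⊥ → C ≠ ⊥ →
    IsFractional (nonZeroDivisors D) A → IsFractional (nonZeroDivisors D) B →
    IsFractional (nonZeroDivisors D) C →
    star (A * B) = star (A * C) → star B = star C

/-- The ∗-dimension of `D`: the supremum of the lengths of chains of quasi-∗-prime ideals
of `D` (between `(0)` and a quasi-∗-prime). -/
noncomputable def starDim (star : Submodule D K → Submodule D K) : ℕ∞ :=
  ⨆ (k : ℕ) (_ : ∃ c : Fin k → Ideal D, StrictMono c ∧ ∀ i, QuasiStarPrime star (c i)),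
    (k : ℕ∞)

/-- A submodule `T` of `K` (containing the image of an integral domain with quotient
field `K`) is integrally closed (in `K`) if every `x ∈ K` satisfying a monic polynomial
equation with coefficients in `T` belongs to `T`. -/
def IntegrallyClosedSub (T : Submodule D K) : Prop :=
  ∀ x : K, (∃ (n : ℕ) (c : Fin n → K), (∀ i, c i ∈ T) ∧
    x ^ n = ∑ i : Fin n, c i * x ^ (i : ℕ)) → x ∈ T

/-- The content ideal `c(p)` of a polynomial: the ideal generated by its coefficients. -/
def contentIdeal (p : Polynomial D) : Ideal D := Ideal.span (Set.range p.coeff)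

/-- The multiplicative set `N(⋆) = { h ∈ D[X] : h ≠ 0, c(h)^⋆ = D^⋆ }` (as a submonoid,
via the closure of this multiplicatively closed set). -/
noncomputable def nagataMonoid (star : Submodule D K → Submodule D K) : Submonoid (Polynomial D) :=
  Submonoid.closure
    {p : Polynomial D | p ≠ 0 ∧ star (idealExt K (contentIdeal p)) = star (1 : Submodule D K)}

/-- The Nagata ring `Na(D,⋆) = D[X]_{N(⋆)}`. -/
abbrev NagataRing (star : Submodule D K → Submodule D K) :=
  Localization (nagataMonoid star)

/-- `V` is a valuation overring of `D` (inside the quotient field `K`): `D ⊆ V ⊆ K` and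
for every nonzero `x ∈ K`, `x ∈ V` or `x⁻¹ ∈ V`. -/
def IsValuationOverring (D : Type*) [CommRing D] {K : Type*} [Field K] [Algebra D K]
    (V : Subring K) : Prop :=
  (∀ d : D, algebraMap D K d ∈ V) ∧ ∀ x : K, x ≠ 0 → (x ∈ V ∨ x⁻¹ ∈ V)

/-- `V` is a ∗-valuation overring of `D`: a valuation overring such that `F^∗ ⊆ FV` for
every nonzero finitely generated `D`-submodule `F` of `K`. -/
def IsStarValuationOverring (star : Submodule D K → Submodule D K) (V : Subring K) : Prop :=
  IsValuationOverring D V ∧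
    ∀ F : Submodule D K, F ≠ ⊥ → F.FG →
      star F ≤ Submodule.span D ((F : Set K) * (V : Set K))

/-- `D` is a Krull domain: there is a family of rank-one discrete valuation overrings of `D`
with quotient field `K` whose intersection is `D`, with finite character. -/
def IsKrullDomain (D : Type*) [CommRing D] (K : Type*) [Field K] [Algebra D K] : Prop :=
  ∃ 𝒱 : Set (Subring K),
    (∀ V ∈ 𝒱, (∀ d : D, algebraMap D K d ∈ V) ∧ IsDVR V ∧
      ∀ x : K, ∃ a ∈ V, ∃ b ∈ V, b ≠ 0 ∧ x * b = a) ∧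
    (⋂ V ∈ 𝒱, (V : Set K)) = Set.range (algebraMap D K) ∧
    ∀ d : D, d ≠ 0 → {V ∈ 𝒱 | ¬ ∃ y ∈ V, algebraMap D K d * y = 1}.Finite

end SemistarDefs

/-!
If `D` is ⋆-Dedekind, every nonzero ideal `I` is contained in `J^⋆` for some finitely generated
`J ⊆ I`. At a quasi-⋆-maximal ideal `M` the valuation property gives `a ∈ J` and `s ∉ M` with
`s J ⊆ a D`, and then `s I ⊆ s J^v ⊆ a D`; so `I` is principal at `M` and `D_M` is a DVR. The
quasi-⋆-maximal ideals containing `d ≠ 0` are therefore minimal over the closure of `d D`, and by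
Noetherian induction there are finitely many of them. Since membership in `E^⋆` can be tested at
the quasi-⋆-maximal ideals, `D = ⋂ D_M`, and `s F^v ⊆ a D ⊆ F` at each `M` gives `F^v = F^⋆` for
finitely generated `F`.

Conversely, let `D` be Krull. Each nonzero ideal `I` contains a finitely generated `J` with
`I^v = J^v`: take one nonzero `x ∈ I` and a generator of `I V` for each of the finitely many `V`
where `x` is not a unit. When `⋆_f = t` this gives the ⋆-Noetherian property. Moreover
`(I I⁻¹)^v = D` because `D` is completely integrally closed, so `I I⁻¹` is not contained in any
quasi-`t`-maximal `M`; applied to `I = (x, y)` this makes one of `x`, `y` divide the other in `D_M`.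
-/

section Submodule

variable {D K : Type*} [CommRing D] [Field K] [Algebra D K]

lemma mem_idealExt {I : Ideal D} {x : K} :
    x ∈ idealExt K I ↔ ∃ d ∈ I, algebraMap D K d = x :=
  Submodule.mem_map

lemma algebraMap_mem_idealExt {I : Ideal D} {d : D} (hd : d ∈ I) :
    algebraMap D K d ∈ idealExt K I :=
  Submodule.mem_map_of_mem hd

lemma idealExt_mono {I J : Ideal D} (h : I ≤ J) : idealExt K I ≤ idealExt K J :=
  Submodule.map_mono h

lemma idealExt_ne_bot [FaithfulSMul D K] {I : Ideal D} (hI : I ≠ ⊥) : idealExt K I ≠ ⊥ :=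
  ((Submodule.map_injective_of_injective (FaithfulSMul.algebraMap_injective D K)).ne_iff'
    (Submodule.map_bot _)).2 hI

lemma idealExt_le_one (I : Ideal D) : idealExt K I ≤ 1 := by
  rintro _ ⟨d, -, rfl⟩
  exact Submodule.mem_one.2 ⟨d, rfl⟩

lemma one_div_antitone {E F : Submodule D K} (h : E ≤ F) : 1 / F ≤ 1 / E :=
  Submodule.le_div_iff.2 fun _ hx _ hy => Submodule.mem_div_iff_forall_mul_mem.1 hx _ (h hy)

lemma le_vOp (E : Submodule D K) : E ≤ vOp E := by
  rw [vOp, Submodule.le_div_iff_mul_le]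
  exact Submodule.mul_one_div_le_one

lemma star_le_finTypeOp (star : Submodule D K → Submodule D K) {E F : Submodule D K}
    (hF : F ≠ ⊥) (hfg : F.FG) (hFE : F ≤ E) : star F ≤ finTypeOp star E :=
  le_iSup₂_of_le F hF (le_iSup₂_of_le hfg hFE le_rfl)

lemma finTypeOp_le_iff {star : Submodule D K → Submodule D K} {E G : Submodule D K} :
    finTypeOp star E ≤ G ↔ ∀ F : Submodule D K, F ≠ ⊥ → F.FG → F ≤ E → star F ≤ G := by
  simp only [finTypeOp, iSup_le_iff]

lemma colon_singleton_ne_bot [IsFractionRing D K] {E : Submodule D K} (hE : E ≠ ⊥) (x : K) :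
    E.colon {x} ≠ ⊥ := by
  obtain ⟨e, he, he0⟩ := Submodule.exists_mem_ne_zero_of_ne_bot hE
  obtain ⟨⟨p, q⟩, hpq⟩ := IsLocalization.surj (nonZeroDivisors D) (x / e)
  have := (algebraMap D K).domain_nontrivial
  have hqx : (q : D) • x = p • e := by
    rw [Algebra.smul_def, Algebra.smul_def, ← hpq]
    field_simp
  exact (Submodule.ne_bot_iff _).2 ⟨q, Submodule.mem_colon_singleton.2 (hqx ▸ E.smul_mem p he),
    nonZeroDivisors.coe_ne_zero q⟩

end Submodule

section IsSemistarOperation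

variable {D K : Type*} [CommRing D] [Field K] [Algebra D K]
variable {star : Submodule D K → Submodule D K}

namespace IsSemistarOperation

lemma star_le_star (hs : IsSemistarOperation star) {E F : Submodule D K}
    (hE : E ≠ ⊥) (hF : F ≠ ⊥) (h : E ≤ star F) : star E ≤ star F :=
  (hs.mono hE (hs.ne_bot hF) h).trans (hs.star_star hF).le

lemma mul_mem_star (hs : IsSemistarOperation star) {E F : Submodule D K}
    (hE : E ≠ ⊥) (hF : F ≠ ⊥) {x : K} (h : ∀ e ∈ E, x * e ∈ F) {e : K} (he : e ∈ star E) :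
    x * e ∈ star F := by
  obtain rfl | hx := eq_or_ne x 0
  · simp
  have hxE : E.map (LinearMap.mulLeft D x) ≠ ⊥ :=
    ((Submodule.map_injective_of_injective (mul_right_injective₀ hx)).ne_iff'
      (Submodule.map_bot _)).2 hE
  have hle : E.map (LinearMap.mulLeft D x) ≤ F := Submodule.map_le_iff_le_comap.2 h
  exact hs.mono hxE hF hle (hs.map_smul x hx hE ▸ Submodule.mem_map_of_mem he)

lemma star_le_vOp (hs : IsSemistarOperation star) (hone : star 1 = 1) {E : Submodule D K}
    (hE : E ≠ ⊥) : star E ≤ vOp E := by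
  refine Submodule.le_div_iff.2 fun x hx z hz => ?_
  rw [mul_comm, ← hone]
  exact hs.mul_mem_star hE one_ne_zero (Submodule.mem_div_iff_forall_mul_mem.1 hz) hx

lemma finTypeOp_le_star (hs : IsSemistarOperation star) {E : Submodule D K} (hE : E ≠ ⊥) :
    finTypeOp star E ≤ star E :=
  finTypeOp_le_iff.2 fun _ hF _ hFE => hs.mono hF hE hFE

end IsSemistarOperation

/-- The quasi-⋆-closure `I^⋆ ∩ D` of an ideal `I` of `D`, the smallest quasi-⋆-ideal
containing `I ≠ 0`. -/
def starClosure (star : Submodule D K → Submodule D K) (I : Ideal D) : Ideal D :=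
  (star (idealExt K I)).comap (Algebra.linearMap D K)

lemma mem_starClosure {I : Ideal D} {d : D} :
    d ∈ starClosure star I ↔ algebraMap D K d ∈ star (idealExt K I) :=
  Iff.rfl

lemma QuasiStarIdeal.algebraMap_mem_star_iff {I : Ideal D} (hI : QuasiStarIdeal star I) {d : D} :
    algebraMap D K d ∈ star (idealExt K I) ↔ d ∈ I := by
  rw [← mem_starClosure, starClosure, hI.2]

lemma QuasiStarIdeal.one_notMem_star {I : Ideal D} (hI : QuasiStarIdeal star I) (hI' : I ≠ ⊤) :
    (1 : K) ∉ star (idealExt K I) := by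
  rwa [← map_one (algebraMap D K), hI.algebraMap_mem_star_iff, ← Ideal.eq_top_iff_one]

namespace IsSemistarOperation

variable [FaithfulSMul D K]

lemma le_starClosure (hs : IsSemistarOperation star) {I : Ideal D} (hI : I ≠ ⊥) :
    I ≤ starClosure star I := fun _ hd =>
  hs.le_star (idealExt_ne_bot hI) (algebraMap_mem_idealExt hd)

lemma starClosure_le (hs : IsSemistarOperation star) {I J : Ideal D} (hI : I ≠ ⊥)
    (hJ : QuasiStarIdeal star J) (h : I ≤ J) : starClosure star I ≤ J := fun _ hd =>
  hJ.algebraMap_mem_star_iff.1 <|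
    hs.mono (idealExt_ne_bot hI) (idealExt_ne_bot hJ.1) (idealExt_mono h) hd

lemma quasiStarIdeal_colon (hs : IsSemistarOperation star) {E : Submodule D K} (hE : E ≠ ⊥)
    (hstar : star E = E) {S : Set K} (hS : E.colon S ≠ ⊥) : QuasiStarIdeal star (E.colon S) := by
  refine ⟨hS, le_antisymm (fun d hd => Submodule.mem_colon.2 fun x hx => ?_)
    (hs.le_starClosure hS)⟩
  rw [Algebra.smul_def, mul_comm, ← hstar]
  refine hs.mul_mem_star (idealExt_ne_bot hS) hE ?_ hd
  rintro _ ⟨c, hc, rfl⟩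
  rw [mul_comm]
  simpa [Algebra.smul_def] using Submodule.mem_colon.1 hc x hx

lemma quasiStarIdeal_starClosure (hs : IsSemistarOperation star) {I : Ideal D} (hI : I ≠ ⊥) :
    QuasiStarIdeal star (starClosure star I) := by
  have hcolon : starClosure star I = (star (idealExt K I)).colon {1} := by
    ext d
    rw [mem_starClosure, Submodule.mem_colon_singleton, Algebra.smul_def, mul_one]
  have hne : starClosure star I ≠ ⊥ := ne_bot_of_le_ne_bot hI (hs.le_starClosure hI)
  rw [hcolon] at hne ⊢
  exact hs.quasiStarIdeal_colon (hs.ne_bot (idealExt_ne_bot hI))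
    (hs.star_star (idealExt_ne_bot hI)) hne

end IsSemistarOperation

lemma QuasiStarIdeal.colon [FaithfulSMul D K] {I : Ideal D} (hI : QuasiStarIdeal star I)
    (hs : IsSemistarOperation star) (S : Set D) : QuasiStarIdeal star (I.colon S) := by
  have hcolon : I.colon S = (star (idealExt K I)).colon (algebraMap D K '' S) := by
    ext d
    simp only [Submodule.mem_colon, Set.forall_mem_image, smul_eq_mul, Algebra.smul_def,
      ← map_mul, hI.algebraMap_mem_star_iff]
  have hne : I.colon S ≠ ⊥ := ne_bot_of_le_ne_bot hI.1 Ideal.le_colon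
  rw [hcolon] at hne ⊢
  exact hs.quasiStarIdeal_colon (hs.ne_bot (idealExt_ne_bot hI.1))
    (hs.star_star (idealExt_ne_bot hI.1)) hne

lemma QuasiStarMaximal.isPrime [FaithfulSMul D K] {M : Ideal D} (hM : QuasiStarMaximal star M)
    (hs : IsSemistarOperation star) : M.IsPrime := by
  refine ⟨hM.2.1, fun {a b} hab => or_iff_not_imp_left.2 fun ha => ?_⟩
  have hne_top : M.colon {a} ≠ ⊤ := fun h =>
    ha ((Submodule.colon_eq_top_iff_subset _).1 h rfl)
  rw [← hM.2.2 _ (hM.1.colon hs {a}) hne_top Ideal.le_colon]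
  simpa [Submodule.mem_colon_singleton, mul_comm] using hab

end IsSemistarOperation

section StarNoetherian

variable {D K : Type*} [CommRing D] [Field K] [Algebra D K]
variable {star : Submodule D K → Submodule D K}

namespace StarNoetherian

lemma wellFoundedGT (hN : StarNoetherian star) :
    WellFoundedGT {I : Ideal D // QuasiStarIdeal star I} := by
  refine wellFoundedGT_iff_monotone_chain_condition.2 fun c => ?_
  obtain ⟨n, hn⟩ := hN ⟨fun n => (c n).1, c.monotone⟩ fun n => (c n).2
  exact ⟨n, fun m hm => Subtype.ext (hn m hm).symm⟩

lemma exists_quasiStarMaximal_ge (hN : StarNoetherian star) {I : Ideal D}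
    (hI : QuasiStarIdeal star I) (hI' : I ≠ ⊤) : ∃ M, QuasiStarMaximal star M ∧ I ≤ M := by
  have := hN.wellFoundedGT
  obtain ⟨⟨M, hM⟩, ⟨hMtop, hIM⟩, hmax⟩ := exists_maximal_of_wellFoundedGT
    (fun M : {I : Ideal D // QuasiStarIdeal star I} => M.1 ≠ ⊤ ∧ I ≤ M.1)
    ⟨⟨I, hI⟩, hI', le_rfl⟩
  refine ⟨M, ⟨hM, hMtop, fun J hJ hJtop hMJ => le_antisymm ?_ hMJ⟩, hIM⟩
  exact hmax (y := ⟨J, hJ⟩) ⟨hJtop, hIM.trans hMJ⟩ hMJ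

lemma exists_fg_le_starClosure [FaithfulSMul D K] (hN : StarNoetherian star)
    (hs : IsSemistarOperation star) {I : Ideal D} (hI : I ≠ ⊥) :
    ∃ J ≤ I, J ≠ ⊥ ∧ J.FG ∧ I ≤ starClosure star J := by
  have := hN.wellFoundedGT
  obtain ⟨x, hx, hx0⟩ := Submodule.exists_mem_ne_zero_of_ne_bot hI
  obtain ⟨⟨C, hC⟩, ⟨J, hJI, hJ, hfg, rfl⟩, hmax⟩ := exists_maximal_of_wellFoundedGT
    (fun C : {I : Ideal D // QuasiStarIdeal star I} =>
      ∃ J ≤ I, J ≠ ⊥ ∧ J.FG ∧ C.1 = starClosure star J)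
    ⟨⟨_, hs.quasiStarIdeal_starClosure (I := Ideal.span {x}) (by simpa using hx0)⟩,
      Ideal.span {x}, by simpa using hx, by simpa using hx0, Submodule.fg_span_singleton x, rfl⟩
  refine ⟨J, hJI, hJ, hfg, fun y hy => ?_⟩
  have hle : J ≤ J ⊔ Ideal.span {y} := le_sup_left
  have hne : J ⊔ Ideal.span {y} ≠ ⊥ := ne_bot_of_le_ne_bot hJ hle
  have hq := hs.quasiStarIdeal_starClosure hne
  refine hmax (y := ⟨_, hq⟩)
    ⟨_, sup_le hJI (by simpa using hy), hne,
      Submodule.FG.sup hfg (Submodule.fg_span_singleton y), rfl⟩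
    (hs.starClosure_le hJ hq (hle.trans (hs.le_starClosure hne))) (hs.le_starClosure hne ?_)
  exact le_sup_right (a := J) (Ideal.mem_span_singleton_self y)

lemma finTypeOp_idealExt [FaithfulSMul D K] (hN : StarNoetherian star)
    (hs : IsSemistarOperation star) {I : Ideal D} (hI : I ≠ ⊥) :
    finTypeOp star (idealExt K I) = star (idealExt K I) := by
  obtain ⟨J, hJI, hJ, hfg, hIJ⟩ := hN.exists_fg_le_starClosure hs hI
  refine (hs.finTypeOp_le_star (idealExt_ne_bot hI)).antisymm ?_
  refine (hs.star_le_star (idealExt_ne_bot hI) (idealExt_ne_bot hJ)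
    (Submodule.map_le_iff_le_comap.2 hIJ)).trans ?_
  exact star_le_finTypeOp star (idealExt_ne_bot hJ) (Submodule.FG.map _ hfg) (idealExt_mono hJI)

lemma quasiStarMaximal_finTypeOp_iff [FaithfulSMul D K] (hN : StarNoetherian star)
    (hs : IsSemistarOperation star) {M : Ideal D} :
    QuasiStarMaximal (finTypeOp star) M ↔ QuasiStarMaximal star M := by
  have hquasi (I : Ideal D) : QuasiStarIdeal (finTypeOp star) I ↔ QuasiStarIdeal star I :=
    and_congr_right fun hI => by rw [hN.finTypeOp_idealExt hs hI]
  simp only [QuasiStarMaximal, hquasi]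

end StarNoetherian

lemma starNoetherian_of_exists_fg [FaithfulSMul D K] (hs : IsSemistarOperation star)
    (h : ∀ I : Ideal D, I ≠ ⊥ → ∃ J ≤ I, J ≠ ⊥ ∧ J.FG ∧ I ≤ starClosure star J) :
    StarNoetherian star := by
  intro c hc
  have hsup : ⨆ n, c n ≠ ⊥ := ne_bot_of_le_ne_bot (hc 0).1 (le_iSup c 0)
  obtain ⟨J, hJsup, hJ, hfg, hsupJ⟩ := h _ hsup
  obtain ⟨n, hn⟩ : ∃ n, J ≤ c n := by
    obtain ⟨_, ⟨n, rfl⟩, hn⟩ := (CompleteLattice.isCompactElement_iff_le_of_directed_sSup_le _ J).1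
      ((Submodule.fg_iff_compact J).1 hfg) (Set.range c) (Set.range_nonempty c)
      c.monotone.directed_le.directedOn_range hJsup
    exact ⟨n, hn⟩
  exact ⟨n, fun m hm => ((le_iSup c m).trans
    (hsupJ.trans (hs.starClosure_le hJ (hc n) hn))).antisymm (c.monotone hm)⟩

lemma minimalPrimes_subset_union_of_mul_le {R : Type*} [CommRing R] {I J₁ J₂ : Ideal R}
    (h₁ : I ≤ J₁) (h₂ : I ≤ J₂) (hmul : J₁ * J₂ ≤ I) :
    I.minimalPrimes ⊆ J₁.minimalPrimes ∪ J₂.minimalPrimes := by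
  rintro P ⟨⟨hP, hIP⟩, hmin⟩
  refine (hP.mul_le.1 (hmul.trans hIP)).imp ?_ ?_ <;> intro hJP
  · exact ⟨⟨hP, hJP⟩, fun Q hQ => hmin ⟨hQ.1, h₁.trans hQ.2⟩⟩
  · exact ⟨⟨hP, hJP⟩, fun Q hQ => hmin ⟨hQ.1, h₂.trans hQ.2⟩⟩

lemma QuasiStarIdeal.finite_minimalPrimes [FaithfulSMul D K] {I : Ideal D}
    (hI : QuasiStarIdeal star I) (hs : IsSemistarOperation star) (hN : StarNoetherian star) :
    I.minimalPrimes.Finite := by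
  have := hN.wellFoundedGT
  suffices h : ∀ I : {I : Ideal D // QuasiStarIdeal star I}, I.1.minimalPrimes.Finite from
    h ⟨I, hI⟩
  intro I
  induction I using WellFoundedGT.induction with | _ I ih
  obtain ⟨I, hI⟩ := I
  dsimp only
  obtain rfl | htop := eq_or_ne I ⊤
  · simp [Ideal.minimalPrimes_top]
  by_cases hprime : I.IsPrime
  · simp [Ideal.minimalPrimes_eq_subsingleton_self]
  -- The usual induction uses `I + (a)` and `I + (b)`; the colons `I : a` and `I : (I : a)` replace
  -- them because they are quasi-⋆-ideals without taking a closure.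
  obtain ⟨a, ha, b, hb, hab⟩ := (Ideal.not_isPrime_iff.1 hprime).resolve_left htop
  have hb₁ : b ∈ I.colon {a} := by simpa [Submodule.mem_colon_singleton, mul_comm] using hab
  have ha₂ : a ∈ I.colon (I.colon {a} : Set D) := Submodule.mem_colon.2 fun c hc => by
    simpa [Submodule.mem_colon_singleton, mul_comm] using hc
  have finite_of_lt {J : Ideal D} (hJ : QuasiStarIdeal star J) (h : I < J) :
      J.minimalPrimes.Finite := ih ⟨J, hJ⟩ h
  refine ((finite_of_lt (hI.colon hs {a}) ?_).union (finite_of_lt (hI.colon hs (I.colon {a})) ?_)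
    ).subset (minimalPrimes_subset_union_of_mul_le Ideal.le_colon Ideal.le_colon ?_)
  · exact lt_of_le_of_ne Ideal.le_colon fun h => hb (h ▸ hb₁)
  · exact lt_of_le_of_ne Ideal.le_colon fun h => ha (h ▸ ha₂)
  · exact Submodule.mul_le.2 fun r hr t ht => by
      simpa [mul_comm] using Submodule.mem_colon.1 ht r hr

lemma StarNoetherian.mem_star_of_forall_quasiStarMaximal [IsFractionRing D K]
    (hN : StarNoetherian star) (hs : IsSemistarOperation star) {E : Submodule D K} (hE : E ≠ ⊥)
    {x : K}
    (h : ∀ M, QuasiStarMaximal star M → ∃ s ∉ M, s • x ∈ star E) : x ∈ star E := by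
  have hq := hs.quasiStarIdeal_colon (hs.ne_bot hE) (hs.star_star hE)
    (colon_singleton_ne_bot (hs.ne_bot hE) x)
  by_contra hxE
  have htop : (star E).colon {x} ≠ ⊤ := fun h =>
    hxE ((Submodule.colon_eq_top_iff_subset _).1 h rfl)
  obtain ⟨M, hM, hle⟩ := hN.exists_quasiStarMaximal_ge hq htop
  obtain ⟨s, hsM, hsx⟩ := h M hM
  exact hsM (hle (Submodule.mem_colon_singleton.2 hsx))

end StarNoetherian

section Localization

variable {R : Type*} [CommRing R]

lemma algebraMap_dvd_algebraMap_iff (S : Submonoid R) (A : Type*) [CommRing A] [Algebra R A]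
    [IsLocalization S A] {x y : R} :
    algebraMap R A x ∣ algebraMap R A y ↔ ∃ s ∈ S, x ∣ s * y := by
  constructor
  · rintro ⟨c, hc⟩
    obtain ⟨⟨r, t⟩, hrt⟩ := IsLocalization.surj S c
    have heq : algebraMap R A (t * y) = algebraMap R A (x * r) := by
      rw [map_mul, map_mul, hc, ← hrt]
      ring
    obtain ⟨u, hu⟩ := (IsLocalization.eq_iff_exists S A).1 heq
    exact ⟨u * t, S.mul_mem u.2 t.2, u * r, by linear_combination hu⟩
  · rintro ⟨s, hs, hdvd⟩
    have hunit : IsUnit (algebraMap R A s) := IsLocalization.map_units A ⟨s, hs⟩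
    rw [← hunit.dvd_mul_left, ← map_mul]
    exact map_dvd _ hdvd

lemma preValuationRing_localization_iff (S : Submonoid R) (A : Type*) [CommRing A] [Algebra R A]
    [IsLocalization S A] :
    PreValuationRing A ↔ ∀ x y : R, ∃ s ∈ S, x ∣ s * y ∨ y ∣ s * x := by
  simp only [and_or_left, exists_or, ← algebraMap_dvd_algebraMap_iff S A]
  rw [PreValuationRing.iff_dvd_total]
  refine ⟨fun h x y => h.total _ _, fun h => ⟨fun a b => ?_⟩⟩
  obtain ⟨x, y, s, hx, hy⟩ := IsLocalization.surj₂ S A a b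
  have hunit : IsUnit (algebraMap R A s) := IsLocalization.map_units A s
  simpa only [← hx, ← hy, hunit.mul_right_dvd, hunit.dvd_mul_right] using h x y

lemma isValuationDomain_localization_atPrime_iff [IsDomain R] (M : Ideal R) [M.IsPrime] :
    IsValuationDomain (Localization.AtPrime M) ↔
      ∀ x y : R, ∃ s ∉ M, x ∣ s * y ∨ y ∣ s * x := by
  have : IsDomain (Localization.AtPrime M) :=
    IsLocalization.isDomain_localization M.primeCompl_le_nonZeroDivisors
  refine Iff.trans ⟨fun ⟨_, h⟩ => h.toPreValuationRing, fun h => ⟨this, { h with }⟩⟩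
    (preValuationRing_localization_iff M.primeCompl (Localization.AtPrime M))

lemma isPrincipalIdealRing_localization (S : Submonoid R) (A : Type*) [CommRing A] [Algebra R A]
    [IsLocalization S A] (h : ∀ I : Ideal R, ∃ a ∈ I, ∃ s ∈ S, ∀ x ∈ I, a ∣ s * x) :
    IsPrincipalIdealRing A := by
  refine ⟨fun J => ?_⟩
  obtain ⟨a, ha, s, hs, hdvd⟩ := h (J.comap (algebraMap R A))
  refine ⟨algebraMap R A a, le_antisymm ?_ ((Ideal.span_singleton_le_iff_mem _).2 ha)⟩
  rw [← IsLocalization.map_under S A J, Ideal.map_le_iff_le_comap]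
  exact fun x hx => Ideal.mem_span_singleton.2
    ((algebraMap_dvd_algebraMap_iff S A).2 ⟨s, hs, hdvd x hx⟩)

section Module

variable {N : Type*} [AddCommGroup N] [Module R N]

lemma mul_smul_sup_le_span_singleton {F G : Submodule R N} {a b : N} {s t u : R}
    (hF : s • F ≤ R ∙ a) (hG : t • G ≤ R ∙ b) (hab : u • a ∈ R ∙ b) :
    (s * t * u) • (F ⊔ G) ≤ R ∙ b := by
  have hspan : u • (R ∙ a) ≤ R ∙ b := by
    rwa [Submodule.smul_span, Submodule.span_le, Set.smul_set_singleton, Set.singleton_subset_iff]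
  rw [Submodule.smul_sup']
  refine sup_le ?_ ?_
  · calc (s * t * u) • F = t • u • s • F := by simp only [smul_smul]; congr 1; ring
      _ ≤ t • u • (R ∙ a) := by gcongr
      _ ≤ t • (R ∙ b) := by gcongr
      _ ≤ R ∙ b := Submodule.smul_le_self_of_tower t _
  · calc (s * t * u) • G = (s * u) • t • G := by simp only [smul_smul]; congr 1; ring
      _ ≤ (s * u) • (R ∙ b) := by gcongr
      _ ≤ R ∙ b := Submodule.smul_le_self_of_tower (s * u) _

lemma exists_smul_le_span_singleton_of_fg (S : Submonoid R)
    (htotal : ∀ x y : N, ∃ s ∈ S, s • x ∈ R ∙ y ∨ s • y ∈ R ∙ x) {F : Submodule R N}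
    (hF : F.FG) : ∃ a ∈ F, ∃ s ∈ S, s • F ≤ R ∙ a := by
  induction F, hF using Submodule.fg_induction with
  | singleton x =>
    exact ⟨x, Submodule.mem_span_singleton_self x, 1, S.one_mem, (one_smul R (R ∙ x)).le⟩
  | sup F G _ _ ihF ihG =>
    obtain ⟨a, ha, s, hs, hFa⟩ := ihF
    obtain ⟨b, hb, t, ht, hGb⟩ := ihG
    obtain ⟨u, hu, hab | hba⟩ := htotal a b
    · exact ⟨b, Submodule.mem_sup_right hb, s * t * u, S.mul_mem (S.mul_mem hs ht) hu,
        mul_smul_sup_le_span_singleton hFa hGb hab⟩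
    · rw [sup_comm]
      exact ⟨a, Submodule.mem_sup_right ha, t * s * u, S.mul_mem (S.mul_mem ht hs) hu,
        mul_smul_sup_le_span_singleton hGb hFa hba⟩

end Module

lemma IsValuationDomain.exists_smul_mem_span_singleton [IsDomain R] {K : Type*} [Field K]
    [Algebra R K] [IsFractionRing R K] {M : Ideal R} [M.IsPrime]
    (hv : IsValuationDomain (Localization.AtPrime M)) (x y : K) :
    ∃ s ∈ M.primeCompl, s • x ∈ R ∙ y ∨ s • y ∈ R ∙ x := by
  obtain ⟨p, q, d, hp, hq⟩ := IsLocalization.surj₂ (nonZeroDivisors R) K x y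
  have hd : algebraMap R K d ≠ 0 := IsFractionRing.to_map_ne_zero_of_mem_nonZeroDivisors d.2
  have smul_mem_of_dvd {a b s : R} {z w : K} (ha : z * algebraMap R K d = algebraMap R K a)
      (hb : w * algebraMap R K d = algebraMap R K b) (h : a ∣ s * b) : s • w ∈ R ∙ z := by
    obtain ⟨c, hc⟩ := h
    refine Submodule.mem_span_singleton.2 ⟨c, mul_right_cancel₀ hd ?_⟩
    rw [smul_mul_assoc, smul_mul_assoc, ha, hb, Algebra.smul_def, Algebra.smul_def, ← map_mul,
      ← map_mul, hc, mul_comm]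
  obtain ⟨s, hs, h⟩ := (isValuationDomain_localization_atPrime_iff M).1 hv q p
  exact ⟨s, hs, h.imp (smul_mem_of_dvd hq hp) (smul_mem_of_dvd hp hq)⟩

lemma isDVR_localization_atPrime [IsDomain R] {M : Ideal R} [M.IsPrime] (hM : M ≠ ⊥)
    (h : ∀ I : Ideal R, ∃ a ∈ I, ∃ s ∉ M, ∀ x ∈ I, a ∣ s * x) :
    IsDVR (Localization.AtPrime M) := by
  have hdom : IsDomain (Localization.AtPrime M) :=
    IsLocalization.isDomain_localization M.primeCompl_le_nonZeroDivisors
  have hpid := isPrincipalIdealRing_localization M.primeCompl (Localization.AtPrime M) h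
  refine ⟨hdom, { hpid with not_a_field' := fun hbot => ?_ }⟩
  exact IsLocalization.AtPrime.not_isField R hM (Localization.AtPrime M)
    (IsLocalRing.isField_iff_maximalIdeal_eq.2 hbot)

lemma IsDVR.eq_of_le_of_ne_bot [IsDomain R] {M P : Ideal R} [M.IsPrime]
    (h : IsDVR (Localization.AtPrime M)) (hP : P.IsPrime) (hP0 : P ≠ ⊥) (hPM : P ≤ M) :
    P = M := by
  obtain ⟨hdom, hdvr⟩ := h
  have hne : P.map (algebraMap R (Localization.AtPrime M)) ≠ ⊥ := fun hbot =>
    hP0 ((Ideal.map_eq_bot_iff_of_injective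
      (IsLocalization.injective _ M.primeCompl_le_nonZeroDivisors)).1 hbot)
  have hprime : (P.map (algebraMap R (Localization.AtPrime M))).IsPrime :=
    Ideal.isPrime_map_of_isLocalizationAtPrime M hPM
  have hmax := IsLocalRing.eq_maximalIdeal (hprime.isMaximal hne)
  rw [← Ideal.under_map_of_isLocalizationAtPrime (S := Localization.AtPrime M) M hPM, hmax,
    Localization.AtPrime.under_maximalIdeal]

end Localization

section Forward

variable {D K : Type*} [CommRing D] [Field K] [Algebra D K]

lemma ne_zero_of_smul_le_span_singleton [FaithfulSMul D K] {F : Submodule D K} (hF : F ≠ ⊥)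
    {s : D} (hs : s ≠ 0) {a : K} (h : s • F ≤ D ∙ a) : a ≠ 0 := by
  rintro rfl
  obtain ⟨f, hf, hf0⟩ := Submodule.exists_mem_ne_zero_of_ne_bot hF
  have hsf : s • f = 0 := by simpa using h (Submodule.smul_mem_pointwise_smul f s F hf)
  simp [Algebra.smul_def, hs, hf0] at hsf

lemma smul_mem_span_singleton_of_mem_vOp {F : Submodule D K} {a : K} (ha : a ≠ 0) {s : D}
    (h : s • F ≤ D ∙ a) {x : K} (hx : x ∈ vOp F) : s • x ∈ D ∙ a := by
  have hsa : algebraMap D K s / a ∈ 1 / F := Submodule.mem_div_iff_forall_mul_mem.2 fun f hf => by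
    obtain ⟨c, hc⟩ := Submodule.mem_span_singleton.1
      (h (Submodule.smul_mem_pointwise_smul f s F hf))
    refine Submodule.mem_one.2 ⟨c, ?_⟩
    rw [Algebra.smul_def, Algebra.smul_def] at hc
    rw [div_mul_eq_mul_div, ← hc, mul_div_cancel_right₀ _ ha]
  obtain ⟨c, hc⟩ := Submodule.mem_one.1 (Submodule.mem_div_iff_forall_mul_mem.1 hx _ hsa)
  refine Submodule.mem_span_singleton.2 ⟨c, ?_⟩
  rw [Algebra.smul_def, Algebra.smul_def, hc]
  field_simp

lemma IsDVR.of_ringEquiv {R S : Type*} [CommRing R] [CommRing S] (e : R ≃+* S) (h : IsDVR R) :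
    IsDVR S := by
  obtain ⟨hdom, hdvr⟩ := h
  have : IsDomain S := e.symm.toMulEquiv.isDomain R
  exact ⟨this, IsDiscreteValuationRing.RingEquivClass.isDiscreteValuationRing e⟩

section AtPrimeSubring

variable [IsDomain D] [IsFractionRing D K]

variable (K) in
/-- The localization of `D` at the prime `P`, realised inside the quotient field `K`, so that
it can serve as a member of the family in `IsKrullDomain`. -/
noncomputable def atPrimeSubring (P : PrimeSpectrum D) : Subring K :=
  (Localization.subalgebra.ofField K P.asIdeal.primeCompl
    P.asIdeal.primeCompl_le_nonZeroDivisors).toSubring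

lemma mem_atPrimeSubring {P : PrimeSpectrum D} {x : K} :
    x ∈ atPrimeSubring K P ↔ ∃ s ∉ P.asIdeal, s • x ∈ (1 : Submodule D K) := by
  have ne_zero {s : D} (hs : s ∉ P.asIdeal) : algebraMap D K s ≠ 0 := by
    rw [Ne, FaithfulSMul.algebraMap_eq_zero_iff]
    rintro rfl
    exact hs P.asIdeal.zero_mem
  simp only [Submodule.mem_one, Algebra.smul_def]
  constructor
  · rintro ⟨a, s, hs, rfl⟩
    exact ⟨s, hs, a, by field_simp [ne_zero hs]⟩
  · rintro ⟨s, hs, a, ha⟩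
    exact ⟨a, s, hs, by rw [ha]; field_simp [ne_zero hs]⟩

lemma algebraMap_mem_atPrimeSubring (P : PrimeSpectrum D) (d : D) :
    algebraMap D K d ∈ atPrimeSubring K P :=
  Subalgebra.algebraMap_mem (Localization.subalgebra.ofField K P.asIdeal.primeCompl
    P.asIdeal.primeCompl_le_nonZeroDivisors) d

lemma exists_mul_eq_mem_atPrimeSubring (P : PrimeSpectrum D) (x : K) :
    ∃ a ∈ atPrimeSubring K P, ∃ b ∈ atPrimeSubring K P, b ≠ 0 ∧ x * b = a := by
  obtain ⟨⟨a, b⟩, hab⟩ := IsLocalization.surj (nonZeroDivisors D) x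
  exact ⟨_, algebraMap_mem_atPrimeSubring P a, _, algebraMap_mem_atPrimeSubring P b,
    IsFractionRing.to_map_ne_zero_of_mem_nonZeroDivisors b.2, hab⟩

lemma isDVR_atPrimeSubring {P : PrimeSpectrum D} (h : IsDVR (Localization.AtPrime P.asIdeal)) :
    IsDVR (atPrimeSubring K P) := by
  have := Localization.subalgebra.isLocalization_ofField K P.asIdeal.primeCompl
    P.asIdeal.primeCompl_le_nonZeroDivisors
  exact h.of_ringEquiv (IsLocalization.algEquiv P.asIdeal.primeCompl
    (Localization.AtPrime P.asIdeal) (Localization.subalgebra.ofField K P.asIdeal.primeCompl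
      P.asIdeal.primeCompl_le_nonZeroDivisors)).toRingEquiv

lemma isKrullDomain_of_isDVR_localization (𝓜 : Set (PrimeSpectrum D))
    (hdvr : ∀ P ∈ 𝓜, IsDVR (Localization.AtPrime P.asIdeal))
    (hinter : ∀ x : K, (∀ P ∈ 𝓜, ∃ s ∉ P.asIdeal, s • x ∈ (1 : Submodule D K)) →
      x ∈ (1 : Submodule D K))
    (hfin : ∀ d : D, d ≠ 0 → {P ∈ 𝓜 | d ∈ P.asIdeal}.Finite) : IsKrullDomain D K := by
  refine ⟨atPrimeSubring K '' 𝓜, ?_, ?_, fun d hd => ?_⟩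
  · rintro _ ⟨P, hP, rfl⟩
    exact ⟨algebraMap_mem_atPrimeSubring P, isDVR_atPrimeSubring (hdvr P hP),
      exists_mul_eq_mem_atPrimeSubring P⟩
  · ext x
    simp only [Set.biInter_image, Set.mem_iInter, SetLike.mem_coe]
    refine ⟨fun hx => Submodule.mem_one.1 (hinter x fun P hP => mem_atPrimeSubring.1 (hx P hP)), ?_⟩
    rintro ⟨d, rfl⟩ P -
    exact algebraMap_mem_atPrimeSubring P d
  · refine ((hfin d hd).image (atPrimeSubring K)).subset ?_
    rintro _ ⟨⟨P, hP, rfl⟩, hunit⟩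
    refine ⟨P, ⟨hP, ?_⟩, rfl⟩
    by_contra hdP
    have hmul : algebraMap D K d * (algebraMap D K d)⁻¹ = 1 := mul_inv_cancel₀ (by simpa using hd)
    refine hunit ⟨_, mem_atPrimeSubring.2 ⟨d, hdP, ?_⟩, hmul⟩
    rw [Algebra.smul_def, hmul]
    exact Submodule.one_le.1 le_rfl

end AtPrimeSubring

namespace StarDedekind

variable [IsDomain D] [IsFractionRing D K] {star : Submodule D K → Submodule D K}

lemma exists_dvd_mul (hD : StarDedekind star) (hs : IsSemistarOperation star) (hone : star 1 = 1)
    {M : Ideal D} [M.IsPrime] (hM : QuasiStarMaximal (finTypeOp star) M) (I : Ideal D) :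
    ∃ a ∈ I, ∃ s ∉ M, ∀ x ∈ I, a ∣ s * x := by
  obtain rfl | hI := eq_or_ne I ⊥
  · exact ⟨0, zero_mem _, 1, M.one_notMem, fun x hx => by simp [(Submodule.mem_bot D).1 hx]⟩
  obtain ⟨J, hJI, hJ, hfg, hIJ⟩ := hD.1.exists_fg_le_starClosure hs hI
  have hJK : idealExt K J ≠ ⊥ := idealExt_ne_bot hJ
  obtain ⟨_, ⟨a, haJ, rfl⟩, s, hsM, hle⟩ := exists_smul_le_span_singleton_of_fg M.primeCompl
    (hD.2 M hM).exists_smul_mem_span_singleton (Submodule.FG.map (Algebra.linearMap D K) hfg)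
  have ha := ne_zero_of_smul_le_span_singleton hJK (ne_of_mem_of_not_mem M.zero_mem hsM).symm hle
  refine ⟨a, hJI haJ, s, hsM, fun x hx => ?_⟩
  obtain ⟨c, hc⟩ := Submodule.mem_span_singleton.1
    (smul_mem_span_singleton_of_mem_vOp ha hle (hs.star_le_vOp hone hJK (hIJ hx)))
  refine ⟨c, FaithfulSMul.algebraMap_injective D K ?_⟩
  simpa [Algebra.smul_def, mul_comm] using hc.symm

lemma starADD (hD : StarDedekind star) (hs : IsSemistarOperation star) (hone : star 1 = 1) :
    StarADD star := fun _ _ hM =>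
  isDVR_localization_atPrime hM.1.1 (hD.exists_dvd_mul hs hone hM)

lemma starFiniteCharacter (hD : StarDedekind star) (hs : IsSemistarOperation star)
    (hone : star 1 = 1) : StarFiniteCharacter star := by
  intro d hd
  have hspan : Ideal.span {d} ≠ ⊥ := by simpa using hd
  have hquasi := hs.quasiStarIdeal_starClosure hspan
  refine (hquasi.finite_minimalPrimes hs hD.1).subset ?_
  rintro M ⟨hM, hdM⟩
  have hM' := (hD.1.quasiStarMaximal_finTypeOp_iff hs).1 hM
  have hprime := hM'.isPrime hs
  refine ⟨⟨hprime, hs.starClosure_le hspan hM'.1 (by simpa using hdM)⟩, fun P ⟨hP, hdP⟩ hPM => ?_⟩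
  exact ((hD.starADD hs hone M hM).eq_of_le_of_ne_bot hP
    (ne_bot_of_le_ne_bot hquasi.1 hdP) hPM).ge

lemma isKrullDomain (hD : StarDedekind star) (hs : IsSemistarOperation star)
    (hone : star 1 = 1) : IsKrullDomain D K := by
  refine isKrullDomain_of_isDVR_localization
    {P | QuasiStarMaximal (finTypeOp star) P.asIdeal}
    (fun P hP => hD.starADD hs hone P.asIdeal hP) (fun x hx => ?_) fun d hd => ?_
  · rw [← hone]
    refine hD.1.mem_star_of_forall_quasiStarMaximal hs one_ne_zero fun M hM => ?_
    have hprime := hM.isPrime hs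
    rw [hone]
    exact hx ⟨M, hprime⟩ ((hD.1.quasiStarMaximal_finTypeOp_iff hs).2 hM)
  · exact (hD.starFiniteCharacter hs hone d hd).preimage fun _ _ _ _ h => PrimeSpectrum.ext h

lemma star_eq_vOp_of_fg (hD : StarDedekind star) (hs : IsSemistarOperation star)
    (hone : star 1 = 1) {F : Submodule D K} (hF : F ≠ ⊥) (hfg : F.FG) : star F = vOp F := by
  refine (hs.star_le_vOp hone hF).antisymm fun x hx => ?_
  refine hD.1.mem_star_of_forall_quasiStarMaximal hs hF fun M hM => ?_
  have hprime := hM.isPrime hs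
  obtain ⟨a, haF, s, hsM, hle⟩ := exists_smul_le_span_singleton_of_fg M.primeCompl
    (hD.2 M ((hD.1.quasiStarMaximal_finTypeOp_iff hs).2 hM)).exists_smul_mem_span_singleton hfg
  have ha := ne_zero_of_smul_le_span_singleton hF (ne_of_mem_of_not_mem M.zero_mem hsM).symm hle
  refine ⟨s, hsM, hs.le_star hF ?_⟩
  exact (Submodule.span_singleton_le_iff_mem a F).2 haF
    (smul_mem_span_singleton_of_mem_vOp ha hle hx)

lemma finTypeOp_eq (hD : StarDedekind star) (hs : IsSemistarOperation star)
    (hone : star 1 = 1) : finTypeOp star = finTypeOp vOp := by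
  ext1 E
  exact iSup_congr fun F => iSup_congr fun hF => iSup_congr fun hfg => by
    rw [hD.star_eq_vOp_of_fg hs hone hF hfg]

end StarDedekind

end Forward

section Backward

variable {D K : Type*} [CommRing D] [Field K] [Algebra D K]

lemma IsDVR.exists_mem_forall_dvd {R : Type*} [CommRing R] (h : IsDVR R) {S : Set R}
    (hS : S.Nonempty) : ∃ y ∈ S, ∀ x ∈ S, y ∣ x := by
  obtain ⟨hdom, hdvr⟩ := h
  obtain ⟨y, hy, hmin⟩ :=
    exists_minimalFor_of_wellFoundedLT (· ∈ S) (IsDiscreteValuationRing.addVal R) hS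
  exact ⟨y, hy, fun x hx => (IsDiscreteValuationRing.addVal_le_iff_dvd).1
    ((le_total _ _).elim id (hmin hx))⟩

lemma IsDVR.mem_of_forall_pow_mul_mem {V : Subring K} (hV : IsDVR V) {z w : K} (hw : w ≠ 0)
    (h : ∀ n : ℕ, z ^ n * w ∈ V) : z ∈ V := by
  obtain rfl | hz := eq_or_ne z 0
  · exact V.zero_mem
  obtain ⟨_, ⟨n, rfl⟩, hdvd⟩ := hV.exists_mem_forall_dvd
    (Set.range_nonempty fun n : ℕ => (⟨z ^ n * w, h n⟩ : V))
  obtain ⟨⟨c, hcV⟩, hc⟩ := hdvd _ ⟨n + 1, rfl⟩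
  have hzc : z ^ (n + 1) * w = z ^ n * w * c := congrArg Subtype.val hc
  have : z = c := mul_left_cancel₀ (mul_ne_zero (pow_ne_zero n hz) hw) (by rw [← hzc]; ring)
  rwa [this]

lemma IsDVR.exists_mem_ideal_forall_eq_mul {V : Subring K} (hV : IsDVR V)
    (hDV : ∀ d : D, algebraMap D K d ∈ V) (I : Ideal D) :
    ∃ y ∈ I, ∀ a ∈ I, ∃ c ∈ V, algebraMap D K a = algebraMap D K y * c := by
  let f (d : D) : V := ⟨algebraMap D K d, hDV d⟩
  obtain ⟨_, ⟨y, hy, rfl⟩, hdvd⟩ := hV.exists_mem_forall_dvd (S := f '' I)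
    (I.nonempty.image f)
  refine ⟨y, hy, fun a ha => ?_⟩
  obtain ⟨c, hc⟩ := hdvd _ ⟨a, ha, rfl⟩
  exact ⟨c, c.2, congrArg Subtype.val hc⟩

lemma vOp_mono {E F : Submodule D K} (h : E ≤ F) : vOp E ≤ vOp F :=
  one_div_antitone (one_div_antitone h)

-- If `z E E⁻¹ ⊆ D` then `z E⁻¹ ⊆ E⁻¹`, so any nonzero `w ∈ E⁻¹` and `e ∈ E` give `zⁿ w e ∈ D`
-- for all `n`.
lemma one_mem_vOp_mul_one_div
    (hcic : ∀ z w : K, w ≠ 0 → (∀ n : ℕ, z ^ n * w ∈ (1 : Submodule D K)) →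
      z ∈ (1 : Submodule D K))
    {E : Submodule D K} (hE : E ≠ ⊥) (hE' : 1 / E ≠ ⊥) : (1 : K) ∈ vOp (E * (1 / E)) := by
  obtain ⟨e, he, he0⟩ := Submodule.exists_mem_ne_zero_of_ne_bot hE
  obtain ⟨w, hw, hw0⟩ := Submodule.exists_mem_ne_zero_of_ne_bot hE'
  refine Submodule.mem_div_iff_forall_mul_mem.2 fun z hz => ?_
  rw [one_mul]
  have mul_mem {v : K} (hv : v ∈ 1 / E) : z * v ∈ 1 / E :=
    Submodule.mem_div_iff_forall_mul_mem.2 fun y hy => by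
      rw [mul_assoc, mul_comm v]
      exact Submodule.mem_div_iff_forall_mul_mem.1 hz _ (Submodule.mul_mem_mul hy hv)
  have pow_mul_mem (n : ℕ) : z ^ n * w ∈ 1 / E := by
    induction n with
    | zero => simpa using hw
    | succ n ih => rw [pow_succ', mul_assoc]; exact mul_mem ih
  refine hcic z (w * e) (mul_ne_zero hw0 he0) fun n => ?_
  rw [← mul_assoc]
  exact Submodule.mem_div_iff_forall_mul_mem.1 (pow_mul_mem n) e he

namespace IsKrullDomain

lemma mem_one_of_forall_pow_mul_mem (hK : IsKrullDomain D K) {z w : K} (hw : w ≠ 0)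
    (h : ∀ n : ℕ, z ^ n * w ∈ (1 : Submodule D K)) : z ∈ (1 : Submodule D K) := by
  obtain ⟨𝒱, hover, hinter, -⟩ := hK
  simp only [Submodule.mem_one, ← Set.mem_range, ← hinter, Set.mem_iInter] at h ⊢
  exact fun V hV => (hover V hV).2.1.mem_of_forall_pow_mul_mem hw fun n => h n V hV

lemma exists_fg_one_div_le (hK : IsKrullDomain D K) {I : Ideal D} (hI : I ≠ ⊥) :
    ∃ J ≤ I, J ≠ ⊥ ∧ J.FG ∧ 1 / idealExt K J ≤ 1 / idealExt K I := by
  obtain ⟨𝒱, hover, hinter, hfin⟩ := hK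
  obtain ⟨x, hxI, hx0⟩ := Submodule.exists_mem_ne_zero_of_ne_bot hI
  choose g hgI hg using fun V : 𝒱 =>
    (hover V V.2).2.1.exists_mem_ideal_forall_eq_mul (hover V V.2).1 I
  -- `x` generates `I V = V` wherever it is a unit, and `g V` generates `I V` at the finitely many
  -- remaining `V`.
  let T : Set 𝒱 := {V | ¬ ∃ y ∈ V.1, algebraMap D K x * y = 1}
  have hT : T.Finite := ((hfin x hx0).preimage Subtype.val_injective.injOn).subset
    fun V hV => ⟨V.2, hV⟩
  have hxJ : x ∈ Ideal.span (insert x (g '' T)) := Ideal.subset_span (Set.mem_insert _ _)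
  refine ⟨Ideal.span (insert x (g '' T)), Ideal.span_le.2 (Set.insert_subset hxI ?_),
    (Submodule.ne_bot_iff _).2 ⟨x, hxJ, hx0⟩, Submodule.fg_span ((hT.image g).insert x),
    fun z hz => ?_⟩
  · exact Set.image_subset_iff.2 fun V _ => hgI V
  have hzJ {b : D} (hb : b ∈ Ideal.span (insert x (g '' T))) (V : 𝒱) :
      z * algebraMap D K b ∈ V.1 := by
    obtain ⟨d, hd⟩ := Submodule.mem_one.1
      (Submodule.mem_div_iff_forall_mul_mem.1 hz _ (algebraMap_mem_idealExt hb))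
    exact hd ▸ (hover V V.2).1 d
  refine Submodule.mem_div_iff_forall_mul_mem.2 ?_
  rintro _ ⟨a, ha, rfl⟩
  rw [Submodule.mem_one, ← Set.mem_range, ← hinter, Set.mem_iInter₂]
  intro V hV
  by_cases hVT : ⟨V, hV⟩ ∈ T
  · obtain ⟨c, hcV, hc⟩ := hg ⟨V, hV⟩ a ha
    rw [Algebra.linearMap_apply, hc, ← mul_assoc]
    exact V.mul_mem (hzJ (Ideal.subset_span (Set.mem_insert_of_mem _ ⟨_, hVT, rfl⟩)) ⟨V, hV⟩) hcV
  · obtain ⟨y, hyV, hxy⟩ := not_not.1 hVT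
    have hza : z * algebraMap D K a = z * algebraMap D K x * y * algebraMap D K a := by
      linear_combination -z * algebraMap D K a * hxy
    rw [Algebra.linearMap_apply, hza]
    exact V.mul_mem (V.mul_mem (hzJ hxJ ⟨V, hV⟩) hyV) ((hover V hV).1 a)

variable [FaithfulSMul D K]

lemma vOp_idealExt_le_finTypeOp (hK : IsKrullDomain D K) {I : Ideal D} (hI : I ≠ ⊥) :
    vOp (idealExt K I) ≤ finTypeOp vOp (idealExt K I) := by
  obtain ⟨J, hJI, hJ, hfg, hle⟩ := hK.exists_fg_one_div_le hI
  exact (one_div_antitone hle).trans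
    (star_le_finTypeOp vOp (idealExt_ne_bot hJ) (Submodule.FG.map _ hfg) (idealExt_mono hJI))

lemma starNoetherian (hK : IsKrullDomain D K) {star : Submodule D K → Submodule D K}
    (hs : IsSemistarOperation star)
    (ht : ∀ E : Submodule D K, E ≠ ⊥ → finTypeOp star E = finTypeOp vOp E) :
    StarNoetherian star := by
  refine starNoetherian_of_exists_fg hs fun I hI => ?_
  obtain ⟨J, hJI, hJ, hfg, hle⟩ := hK.exists_fg_one_div_le hI
  refine ⟨J, hJI, hJ, hfg, Submodule.map_le_iff_le_comap.1 ?_⟩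
  have hJK : idealExt K J ≠ ⊥ := idealExt_ne_bot hJ
  calc idealExt K I ≤ vOp (idealExt K I) := le_vOp _
    _ ≤ vOp (idealExt K J) := one_div_antitone hle
    _ ≤ finTypeOp vOp (idealExt K J) := hK.vOp_idealExt_le_finTypeOp hJ
    _ = finTypeOp star (idealExt K J) := (ht _ hJK).symm
    _ ≤ star (idealExt K J) := hs.finTypeOp_le_star hJK

lemma not_mul_one_div_le_of_quasiStarIdeal (hK : IsKrullDomain D K) {M : Ideal D}
    (hM : QuasiStarIdeal (finTypeOp (vOp (K := K))) M) (hM' : M ≠ ⊤) {I : Ideal D} (hI : I ≠ ⊥) :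
    ¬ idealExt K I * (1 / idealExt K I) ≤ idealExt K M := fun hle => by
  have hone : (1 : K) ∈ 1 / idealExt K I := Submodule.mem_div_iff_forall_mul_mem.2 fun e he => by
    simpa using idealExt_le_one I he
  refine hM.one_notMem_star hM' (hK.vOp_idealExt_le_finTypeOp hM.1 (vOp_mono hle ?_))
  exact one_mem_vOp_mul_one_div (fun _ _ => hK.mem_one_of_forall_pow_mul_mem) (idealExt_ne_bot hI)
    ((Submodule.ne_bot_iff _).2 ⟨1, hone, one_ne_zero⟩)

lemma isValuationDomain_localization [IsDomain D] (hK : IsKrullDomain D K) {M : Ideal D}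
    [M.IsPrime] (hM : QuasiStarIdeal (finTypeOp (vOp (K := K))) M) :
    IsValuationDomain (Localization.AtPrime M) := by
  refine (isValuationDomain_localization_atPrime_iff M).2 fun x y => ?_
  obtain rfl | hx := eq_or_ne x 0
  · exact ⟨1, M.one_notMem, .inr (by simp)⟩
  have hI : Ideal.span {x, y} ≠ ⊥ := (Submodule.ne_bot_iff _).2
    ⟨x, Ideal.subset_span (Set.mem_insert x _), hx⟩
  have hnot := hK.not_mul_one_div_le_of_quasiStarIdeal hM (Ideal.IsPrime.ne_top ‹_›) hI
  contrapose! hnot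
  refine Submodule.mul_le.2 fun e he z hz => ?_
  have exists_eq_mul {a : D} (ha : a ∈ Ideal.span {x, y}) :
      ∃ c, algebraMap D K c = z * algebraMap D K a := Submodule.mem_one.1
    (Submodule.mem_div_iff_forall_mul_mem.1 hz _ (algebraMap_mem_idealExt ha))
  obtain ⟨c, hc⟩ := exists_eq_mul (Ideal.subset_span (Set.mem_insert x _))
  obtain ⟨d, hd⟩ := exists_eq_mul (Ideal.subset_span (Set.mem_insert_of_mem x rfl))
  have hcd : c * y = d * x := FaithfulSMul.algebraMap_injective D K <| by
    rw [map_mul, map_mul, hc, hd]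
    ring
  have hcM : c ∈ M := by
    by_contra hcM
    exact (hnot c hcM).1 (hcd ▸ dvd_mul_left x d)
  have hdM : d ∈ M := by
    by_contra hdM
    exact (hnot d hdM).2 (hcd ▸ dvd_mul_left y c)
  obtain ⟨_, ha, rfl⟩ := he
  obtain ⟨r, t, rfl⟩ := Ideal.mem_span_pair.1 ha
  refine mem_idealExt.2
    ⟨r * c + t * d, M.add_mem (M.mul_mem_left r hcM) (M.mul_mem_left t hdM), ?_⟩
  simp only [Algebra.linearMap_apply, map_add, map_mul, hc, hd]
  ring

end IsKrullDomain

end Backward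

section Statement

variable {D : Type*} [CommRing D] [IsDomain D]
variable {K : Type*} [Field K] [Algebra D K] [IsFractionRing D K]

/-- `D` an integral domain, `⋆` a (semi)star operation on `D`
(`D^⋆ = D`). Then `D` is a ⋆-Dedekind domain iff `D` is a Krull domain and `⋆_f = t`
(on every nonzero submodule). -/
theorem starDedekind_iff_krull_and_finType_eq_t
    (star : Submodule D K → Submodule D K) (hstar : IsSemistarOperation star)
    (hsemi : star (1 : Submodule D K) = 1) :
    StarDedekind star ↔
      (IsKrullDomain D K ∧
        ∀ E : Submodule D K, E ≠ ⊥ → finTypeOp star E = finTypeOp (vOp (D := D) (K := K)) E) := by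
  constructor
  · intro hD
    exact ⟨hD.isKrullDomain hstar hsemi, fun E _ => congrFun (hD.finTypeOp_eq hstar hsemi) E⟩
  · rintro ⟨hK, ht⟩
    refine ⟨hK.starNoetherian hstar ht, fun M _ ⟨⟨hM, hMstar⟩, _⟩ => ?_⟩
    rw [ht _ (idealExt_ne_bot hM)] at hMstar
    exact hK.isValuationDomain_localization ⟨hM, hMstar⟩

end Statement
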